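/- arXiv:1403.3204 — 2 statements merged into one kernel-verified Lean document; each statement's English description precedes it below -/
import Mathlib

section
/- Let C be a nonempty closed convex subset of a real Hilbert space H, let T : C → C be a nonexpansive mapping, and let S : C → C be a k-strictly pseudocontractive mapping (0 ≤ k < 1) such that F(T) ∩ F(S) ≠ ∅. Let {λ_n} ⊂ [a, b] for some a, b with 0 < a ≤ b < 1 − k and {α_n} ⊂ [c, d] for some c, d with 0 < c ≤ d < 1. Given x₀ ∈ C, define y_n = α_n x_n + (1 − α_n) T((1 − λ_n) x_n + λ_n S x_n) and x_{n+1} = T((1 − λ_n) y_n + λ_n S y_n). Then {x_n} converges weakly to a point p ∈ F(T) ∩ F(S), and p = lim_{n→∞} P_{F(T)∩F(S)} x_n (strong limit). -/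
open scoped RealInnerProductSpace
open Filter Topology

lemma aux_self {H : Type*} [NormedAddCommGroup H] [InnerProductSpace ℝ H]
    {z : H} (h : ⟪z, z⟫ ≤ 0) : z = 0 :=
  inner_self_eq_zero (𝕜 := ℝ).1 (le_antisymm h real_inner_self_nonneg)

/-- Monotonicity form of strict pseudocontractivity. -/
lemma aux_mono {H : Type*} [NormedAddCommGroup H] [InnerProductSpace ℝ H]
    {k : ℝ} {p q Sp Sq : H}
    (h : ‖Sp - Sq‖ ^ 2 ≤ ‖p - q‖ ^ 2 + k * ‖(p - Sp) - (q - Sq)‖ ^ 2) :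
    (1 - k) * ‖(p - Sp) - (q - Sq)‖ ^ 2 ≤ 2 * ⟪p - q, (p - Sp) - (q - Sq)⟫ := by
  have e : Sp - Sq = (p - q) - ((p - Sp) - (q - Sq)) := by abel
  rw [e, norm_sub_sq_real] at h
  linarith

lemma aux_combo {H : Type*} [NormedAddCommGroup H] [InnerProductSpace ℝ H]
    (t : ℝ) (u v p : H) :
    ‖(1 - t) • u + t • v - p‖ ^ 2
      = (1 - t) * ‖u - p‖ ^ 2 + t * ‖v - p‖ ^ 2 - t * (1 - t) * ‖u - v‖ ^ 2 := by
  have e1 : (1 - t) • u + t • v - p = (1 - t) • (u - p) + t • (v - p) := by module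
  have e2 : u - v = (u - p) - (v - p) := by abel
  rw [e1, e2, norm_add_sq_real, norm_sub_sq_real (u - p) (v - p), norm_smul, norm_smul, mul_pow, mul_pow,
    Real.norm_eq_abs, Real.norm_eq_abs, sq_abs, sq_abs, real_inner_smul_left,
    real_inner_smul_right]
  ring

/-- The fixed point set of a strict pseudocontraction is convex. -/
lemma aux_fix_convex {H : Type*} [NormedAddCommGroup H] [InnerProductSpace ℝ H]
    {C : Set H} (hC : Convex ℝ C) {k : ℝ} (hk : k < 1) {S : H → H}
    (hS : ∀ x ∈ C, ∀ y ∈ C,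
      ‖S x - S y‖ ^ 2 ≤ ‖x - y‖ ^ 2 + k * ‖(x - S x) - (y - S y)‖ ^ 2) :
    Convex ℝ {x ∈ C | S x = x} := by
  rintro p ⟨hp, hSp⟩ q ⟨hq, hSq⟩ s t hs ht hst
  have hz : s • p + t • q ∈ C := hC hp hq hs ht hst
  refine ⟨hz, ?_⟩
  set z := s • p + t • q with hzdef
  have h1 := aux_mono (hS z hz p hp)
  have h2 := aux_mono (hS z hz q hq)
  rw [hSp, sub_self, sub_zero] at h1
  rw [hSq, sub_self, sub_zero] at h2
  have e : s * ⟪z - p, z - S z⟫ + t * ⟪z - q, z - S z⟫ = 0 := by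
    rw [← real_inner_smul_left, ← real_inner_smul_left, ← inner_add_left]
    have : s • (z - p) + t • (z - q) = 0 := by
      have : s • (z - p) + t • (z - q) = (s + t) • z - (s • p + t • q) := by module
      rw [this, hst, one_smul, ← hzdef, sub_self]
    rw [this, inner_zero_left]
  have h3 : (1 - k) * ‖z - S z‖ ^ 2 ≤ 0 := by
    have := add_le_add (mul_le_mul_of_nonneg_left h1 hs) (mul_le_mul_of_nonneg_left h2 ht)
    rw [← add_mul, hst] at this
    linarith
  have h4 : ‖z - S z‖ ^ 2 ≤ 0 := by
    by_contra! hh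
    have := mul_pos (sub_pos.2 hk) hh
    linarith
  have h5 : z - S z = 0 := by
    rw [← norm_eq_zero]
    exact pow_eq_zero_iff (two_ne_zero) |>.1 (le_antisymm h4 (sq_nonneg _))
  exact (sub_eq_zero.1 h5).symm

/-- Demiclosedness along a filter. -/
lemma aux_demi {H : Type*} [NormedAddCommGroup H] [InnerProductSpace ℝ H]
    {C : Set H} {k : ℝ} (hk : k < 1) {S : H → H}
    (hS : ∀ x ∈ C, ∀ y ∈ C,
      ‖S x - S y‖ ^ 2 ≤ ‖x - y‖ ^ 2 + k * ‖(x - S x) - (y - S y)‖ ^ 2)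
    {U : Filter ℕ} [U.NeBot] {x : ℕ → H} (hx : ∀ n, x n ∈ C) {M : ℝ} (hM : ∀ n, ‖x n‖ ≤ M)
    {q : H} (hq : q ∈ C) (hw : ∀ u : H, Tendsto (fun n => ⟪x n, u⟫) U (𝓝 ⟪q, u⟫))
    (hr : Tendsto (fun n => x n - S (x n)) U (𝓝 0)) : S q = q := by
  have h := fun n => aux_mono (hS (x n) (hx n) q hq)
  have hl : Tendsto (fun n => (1 - k) * ‖(x n - S (x n)) - (q - S q)‖ ^ 2) U
      (𝓝 ((1 - k) * ‖0 - (q - S q)‖ ^ 2)) :=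
    ((((hr.sub_const (q - S q)).norm).pow 2).const_mul (1 - k))
  have hz : Tendsto (fun n => ⟪x n - q, x n - S (x n)⟫) U (𝓝 0) := by
    have hb : Tendsto (fun n => (M + ‖q‖) * ‖x n - S (x n)‖) U (𝓝 0) := by
      simpa using hr.norm.const_mul (M + ‖q‖)
    refine squeeze_zero_norm (fun n => ?_) hb
    refine (norm_inner_le_norm _ _).trans ?_
    refine mul_le_mul_of_nonneg_right ?_ (norm_nonneg _)
    exact (norm_sub_le _ _).trans (by linarith [hM n])
  have hz2 : Tendsto (fun n => ⟪x n - q, q - S q⟫) U (𝓝 0) := by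
    have := (hw (q - S q)).sub_const ⟪q, q - S q⟫
    simpa [inner_sub_left] using this
  have hrhs : Tendsto (fun n => 2 * ⟪x n - q, (x n - S (x n)) - (q - S q)⟫) U (𝓝 0) := by
    have := (hz.sub hz2).const_mul 2
    simpa [inner_sub_right] using this
  have h3 := le_of_tendsto_of_tendsto' hl hrhs h
  rw [zero_sub, norm_neg] at h3
  have h4 : ‖q - S q‖ ^ 2 ≤ 0 := by
    by_contra! hh
    have := mul_pos (sub_pos.2 hk) hh
    linarith
  have h5 : q - S q = 0 := by
    rw [← norm_eq_zero]
    exact pow_eq_zero_iff (two_ne_zero) |>.1 (le_antisymm h4 (sq_nonneg _))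
  exact (sub_eq_zero.1 h5).symm

/-- Weak limits of bounded sequences along ultrafilters. -/
lemma aux_weak {H : Type*} [NormedAddCommGroup H] [InnerProductSpace ℝ H] [CompleteSpace H]
    (U : Ultrafilter ℕ) {x : ℕ → H} {M : ℝ} (hM : ∀ n, ‖x n‖ ≤ M) :
    ∃ q : H, ∀ u : H, Tendsto (fun n => ⟪x n, u⟫) U (𝓝 ⟪q, u⟫) := by
  have hb : ∀ n u, ‖⟪x n, u⟫‖ ≤ M * ‖u‖ := fun n u =>
    (norm_inner_le_norm _ _).trans (mul_le_mul_of_nonneg_right (hM n) (norm_nonneg _))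
  have hex : ∀ u : H, ∃ l : ℝ, Tendsto (fun n => ⟪x n, u⟫) U (𝓝 l) := by
    intro u
    have hc : IsCompact (Metric.closedBall (0 : ℝ) (M * ‖u‖)) := isCompact_closedBall _ _
    obtain ⟨l, -, hl⟩ := hc.ultrafilter_le_nhds (U.map (fun n => ⟪x n, u⟫)) (by
      rw [Filter.le_principal_iff]
      exact Filter.Eventually.of_forall (f := (U : Filter ℕ)) (fun n => by simpa using hb n u))
    exact ⟨l, hl⟩
  choose L hL using hex
  let f : H →ₗ[ℝ] ℝ :=
    { toFun := L
      map_add' := fun u v => tendsto_nhds_unique (hL (u + v))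
        (by simpa [inner_add_right] using (hL u).add (hL v))
      map_smul' := fun r u => tendsto_nhds_unique (hL (r • u))
        (by simpa [real_inner_smul_right] using (hL u).const_mul r) }
  let g : H →L[ℝ] ℝ := f.mkContinuous M (fun u =>
    le_of_tendsto' (hL u).norm (fun n => hb n u))
  refine ⟨(InnerProductSpace.toDual ℝ H).symm g, fun u => ?_⟩
  rw [InnerProductSpace.toDual_symm_apply]
  exact hL u

lemma aux_proj {H : Type*} [NormedAddCommGroup H] [InnerProductSpace ℝ H]
    {F : Set H} (hF : Convex ℝ F) {u v : H} (hv : v ∈ F) (h : ∀ w ∈ F, ‖u - v‖ ≤ ‖u - w‖) :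
    ∀ w ∈ F, ⟪u - v, w - v⟫ ≤ 0 := by
  rw [← norm_eq_iInf_iff_real_inner_le_zero hF hv]
  have : Nonempty F := ⟨⟨v, hv⟩⟩
  refine le_antisymm (le_ciInf fun w => h w w.2) ?_
  exact ciInf_le (f := fun w : F => ‖u - w‖) ⟨0, by rintro _ ⟨w, rfl⟩; exact norm_nonneg _⟩ ⟨v, hv⟩

/-- Closed convex sets are weakly closed. -/
lemma aux_wclosed {H : Type*} [NormedAddCommGroup H] [InnerProductSpace ℝ H] [CompleteSpace H]
    {C : Set H} (hne : C.Nonempty) (hcl : IsClosed C) (hC : Convex ℝ C)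
    {U : Filter ℕ} [U.NeBot] {x : ℕ → H} (hx : ∀ n, x n ∈ C)
    {q : H} (hw : ∀ u : H, Tendsto (fun n => ⟪x n, u⟫) U (𝓝 ⟪q, u⟫)) : q ∈ C := by
  obtain ⟨v, hv, hvi⟩ := exists_norm_eq_iInf_of_complete_convex hne hcl.isComplete hC q
  rw [norm_eq_iInf_iff_real_inner_le_zero hC hv] at hvi
  have h1 : Tendsto (fun n => ⟪x n - v, q - v⟫) U (𝓝 ⟪q - v, q - v⟫) := by
    have := (hw (q - v)).sub_const ⟪v, q - v⟫
    simpa only [inner_sub_left] using this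
  have h2 := le_of_tendsto' h1 (fun n => by rw [real_inner_comm]; exact hvi _ (hx n))
  have h3 : q - v = 0 := aux_self h2
  rw [sub_eq_zero.1 h3]; exact hv

theorem stmt_2
    {H : Type*} [NormedAddCommGroup H] [InnerProductSpace ℝ H] [CompleteSpace H]
    (C : Set H) (hCne : C.Nonempty) (hCcl : IsClosed C) (hCcv : Convex ℝ C)
    (T : H → H) (hTmaps : Set.MapsTo T C C)
    (hT : ∀ x ∈ C, ∀ y ∈ C, ‖T x - T y‖ ≤ ‖x - y‖)
    (k : ℝ) (hk0 : 0 ≤ k) (hk1 : k < 1)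
    (S : H → H) (hSmaps : Set.MapsTo S C C)
    (hS : ∀ x ∈ C, ∀ y ∈ C,
      ‖S x - S y‖ ^ 2 ≤ ‖x - y‖ ^ 2 + k * ‖(x - S x) - (y - S y)‖ ^ 2)
    (F : Set H)
    (hF : F = {x ∈ C | T x = x} ∩ {x ∈ C | S x = x})
    (hFne : F.Nonempty)
    (a b c d : ℝ) (ha : 0 < a) (hab : a ≤ b) (hb : b < 1 - k)
    (hc : 0 < c) (hcd : c ≤ d) (hd : d < 1)
    (lam : ℕ → ℝ) (hlam : ∀ n, lam n ∈ Set.Icc a b)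
    (alp : ℕ → ℝ) (halp : ∀ n, alp n ∈ Set.Icc c d)
    (x y : ℕ → H) (hx0 : x 0 ∈ C)
    (hy : ∀ n, y n = alp n • x n
      + (1 - alp n) • T ((1 - lam n) • x n + lam n • S (x n)))
    (hx : ∀ n, x (n + 1) = T ((1 - lam n) • y n + lam n • S (y n)))
    (PF : H → H) (hPF : ∀ u : H, PF u ∈ F ∧ ∀ w ∈ F, ‖u - PF u‖ ≤ ‖u - w‖) :
    ∃ p ∈ F,
      (∀ u : H, Tendsto (fun n => ⟪x n, u⟫) atTop (𝓝 ⟪p, u⟫)) ∧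
      Tendsto (fun n => PF (x n)) atTop (𝓝 p) := by
  have hT' : ∀ x ∈ C, ∀ y ∈ C,
      ‖T x - T y‖ ^ 2 ≤ ‖x - y‖ ^ 2 + 0 * ‖(x - T x) - (y - T y)‖ ^ 2 := by
    intro u hu v hv
    have := pow_le_pow_left₀ (norm_nonneg _) (hT u hu v hv) 2
    linarith
  have hFcv : Convex ℝ F := by
    rw [hF]
    exact (aux_fix_convex hCcv one_pos hT').inter (aux_fix_convex hCcv hk1 hS)
  have hlam0 : ∀ n, 0 < lam n := fun n => ha.trans_le (hlam n).1
  have hlam1 : ∀ n, lam n < 1 := fun n => by linarith [(hlam n).2]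
  -- the averaged map stays in C and decreases the distance to F
  have hmem : ∀ n, ∀ u ∈ C, (1 - lam n) • u + lam n • S u ∈ C := fun n u hu =>
    hCcv hu (hSmaps hu) (by linarith [hlam1 n]) (hlam0 n).le (by ring)
  have hstep : ∀ n, ∀ u ∈ C, ∀ p ∈ F, ‖T ((1 - lam n) • u + lam n • S u) - p‖ ^ 2
      ≤ ‖u - p‖ ^ 2 - a * (1 - k - b) * ‖u - S u‖ ^ 2 := by
    intro n u hu p hp
    rw [hF] at hp
    obtain ⟨⟨hpC, hTp⟩, -, hSp⟩ := hp
    have h1 := hT' _ (hmem n u hu) p hpC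
    rw [hTp, zero_mul, add_zero, aux_combo] at h1
    have h2 := hS u hu p hpC
    rw [hSp, sub_self, sub_zero] at h2
    have h3 := mul_le_mul_of_nonneg_left h2 (hlam0 n).le
    have h4 : a * (1 - k - b) ≤ lam n * (1 - k - lam n) :=
      mul_le_mul (hlam n).1 (by linarith [(hlam n).2]) (by linarith) (hlam0 n).le
    have h5 := mul_le_mul_of_nonneg_right h4 (sq_nonneg ‖u - S u‖)
    nlinarith
  have hg : 0 < a * (1 - k - b) := mul_pos ha (by linarith)
  have hyC : ∀ n, x n ∈ C → y n ∈ C := fun n hn => by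
    rw [hy n]
    exact hCcv hn (hTmaps (hmem n _ hn)) (by linarith [(halp n).1])
      (by linarith [(halp n).2]) (by ring)
  have hxC : ∀ n, x n ∈ C := by
    intro n
    induction n with
    | zero => exact hx0
    | succ n ih => rw [hx n]; exact hTmaps (hmem n _ (hyC n ih))
  set w : ℕ → H := fun n => T ((1 - lam n) • x n + lam n • S (x n)) with hwdef
  have hdesc : ∀ p ∈ F, ∀ n, ‖x (n + 1) - p‖ ^ 2 ≤ ‖x n - p‖ ^ 2
      - (1 - d) * (a * (1 - k - b)) * ‖x n - S (x n)‖ ^ 2 - c * (1 - d) * ‖x n - w n‖ ^ 2 := by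
    intro p hp n
    have h1 := hstep n (y n) (hyC n (hxC n)) p hp
    rw [← hx n] at h1
    have h2 : ‖w n - p‖ ^ 2 ≤ _ := hstep n (x n) (hxC n) p hp
    have h3 : ‖y n - p‖ ^ 2 = (1 - (1 - alp n)) * ‖x n - p‖ ^ 2 + (1 - alp n) * ‖w n - p‖ ^ 2
        - (1 - alp n) * (1 - (1 - alp n)) * ‖x n - w n‖ ^ 2 := by
      rw [hy n]
      exact (congrArg (fun r : ℝ => ‖r • x n + (1 - alp n) • w n - p‖ ^ 2)
        (by ring : alp n = 1 - (1 - alp n))).trans (aux_combo (1 - alp n) (x n) (w n) p)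
    obtain ⟨hc1, hd1⟩ := halp n
    have h4 := mul_le_mul_of_nonneg_left h2 (by linarith : 0 ≤ 1 - alp n)
    have h5 : c * (1 - d) ≤ alp n * (1 - alp n) :=
      mul_le_mul hc1 (by linarith) (by linarith) (by linarith)
    have h6 := mul_le_mul_of_nonneg_right h5 (sq_nonneg ‖x n - w n‖)
    have h7 : 0 ≤ a * (1 - k - b) * ‖x n - S (x n)‖ ^ 2 := mul_nonneg hg.le (sq_nonneg _)
    have h8 := mul_le_mul_of_nonneg_right (by linarith : 1 - d ≤ 1 - alp n) h7
    have h9 : 0 ≤ a * (1 - k - b) * ‖y n - S (y n)‖ ^ 2 := mul_nonneg hg.le (sq_nonneg _)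
    linarith
  have hd0 : 0 < 1 - d := by linarith
  have hanti : ∀ p ∈ F, Antitone (fun n => ‖x n - p‖ ^ 2) := fun p hp =>
    antitone_nat_of_succ_le (fun n => by
      have := hdesc p hp n
      have h1 : 0 ≤ (1 - d) * (a * (1 - k - b)) * ‖x n - S (x n)‖ ^ 2 := by positivity
      have h2 : 0 ≤ c * (1 - d) * ‖x n - w n‖ ^ 2 := by positivity
      linarith)
  have hconv : ∀ D : ℕ → ℝ, Antitone D → (∀ n, 0 ≤ D n) → ∃ l, Tendsto D atTop (𝓝 l) :=
    fun D hD h0 => ⟨_, tendsto_atTop_ciInf hD ⟨0, by rintro _ ⟨n, rfl⟩; exact h0 n⟩⟩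
  obtain ⟨p0, hp0⟩ := hFne
  obtain ⟨l, hl⟩ := hconv _ (hanti p0 hp0) (fun n => sq_nonneg _)
  have hdiff : Tendsto (fun n => ‖x n - p0‖ ^ 2 - ‖x (n + 1) - p0‖ ^ 2) atTop (𝓝 0) := by
    simpa using hl.sub (hl.comp (tendsto_add_atTop_nat 1))
  have hsq : ∀ (r : ℕ → H) (m : ℝ), 0 < m →
      (∀ n, m * ‖r n‖ ^ 2 ≤ ‖x n - p0‖ ^ 2 - ‖x (n + 1) - p0‖ ^ 2) →
      Tendsto r atTop (𝓝 0) := by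
    intro r m hm h
    have h1 : Tendsto (fun n => ‖r n‖ ^ 2) atTop (𝓝 0) := by
      refine squeeze_zero (fun n => sq_nonneg _) (fun n => ?_)
        (by simpa using hdiff.const_mul m⁻¹)
      rw [inv_mul_eq_div, le_div_iff₀ hm]
      linarith [h n]
    have h2 := h1.sqrt
    simp only [Real.sqrt_sq (norm_nonneg _), Real.sqrt_zero] at h2
    exact tendsto_zero_iff_norm_tendsto_zero.2 h2
  have hrS : Tendsto (fun n => x n - S (x n)) atTop (𝓝 0) :=
    hsq _ ((1 - d) * (a * (1 - k - b))) (by positivity) (fun n => by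
      have := hdesc p0 hp0 n
      have h2 : 0 ≤ c * (1 - d) * ‖x n - w n‖ ^ 2 := by positivity
      linarith)
  have hrw : Tendsto (fun n => x n - w n) atTop (𝓝 0) :=
    hsq _ (c * (1 - d)) (by positivity) (fun n => by
      have := hdesc p0 hp0 n
      have h1 : 0 ≤ (1 - d) * (a * (1 - k - b)) * ‖x n - S (x n)‖ ^ 2 := by positivity
      linarith)
  have hwT : Tendsto (fun n => w n - T (x n)) atTop (𝓝 0) := by
    refine squeeze_zero_norm (fun n => ?_) (by simpa using hrS.norm)
    refine (hT _ (hmem n _ (hxC n)) _ (hxC n)).trans ?_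
    have e : (1 - lam n) • x n + lam n • S (x n) - x n = -(lam n • (x n - S (x n))) := by module
    rw [e, norm_neg, norm_smul, Real.norm_eq_abs, abs_of_pos (hlam0 n)]
    exact mul_le_of_le_one_left (norm_nonneg _) (hlam1 n).le
  have hrT : Tendsto (fun n => x n - T (x n)) atTop (𝓝 0) := by
    simpa using hrw.add hwT
  have hM : ∀ n, ‖x n‖ ≤ ‖x 0 - p0‖ + ‖p0‖ := fun n => by
    have h1 : ‖x n - p0‖ ≤ ‖x 0 - p0‖ :=
      (sq_le_sq₀ (norm_nonneg _) (norm_nonneg _)).1 (hanti p0 hp0 (Nat.zero_le n))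
    have h2 := norm_add_le (x n - p0) p0
    rw [sub_add_cancel] at h2
    linarith
  -- strong convergence of the projections
  have hvar : ∀ u, ∀ z ∈ F, ⟪u - PF u, z - PF u⟫ ≤ 0 := fun u =>
    aux_proj hFcv (hPF u).1 (hPF u).2
  have hkey : ∀ m n, n ≤ m → ‖PF (x m) - PF (x n)‖ ^ 2
      ≤ ‖x n - PF (x n)‖ ^ 2 - ‖x m - PF (x m)‖ ^ 2 := by
    intro m n hnm
    have h1 : ‖x m - PF (x n)‖ ^ 2 ≤ ‖x n - PF (x n)‖ ^ 2 := hanti _ (hPF (x n)).1 hnm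
    have h2 := hvar (x m) _ (hPF (x n)).1
    have e : x m - PF (x n) = (x m - PF (x m)) - (PF (x n) - PF (x m)) := by abel
    rw [e, norm_sub_sq_real, norm_sub_rev (PF (x n))] at h1
    linarith
  obtain ⟨l', hl'⟩ := hconv (fun n => ‖x n - PF (x n)‖ ^ 2)
    (fun n m hnm => by linarith [hkey m n hnm, sq_nonneg ‖PF (x m) - PF (x n)‖])
    (fun n => sq_nonneg _)
  have hcau : CauchySeq (fun n => PF (x n)) := by
    rw [Metric.cauchySeq_iff']
    intro ε hε
    obtain ⟨N, hN⟩ := Metric.cauchySeq_iff'.1 hl'.cauchySeq (ε ^ 2) (by positivity)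
    refine ⟨N, fun n hn => ?_⟩
    have h1 := hN n hn
    rw [Real.dist_eq, abs_lt] at h1
    have h2 := hkey n N hn
    rw [dist_eq_norm]
    exact (sq_lt_sq₀ (norm_nonneg _) hε.le).1 (by linarith [h1.1])
  obtain ⟨p, hp⟩ := cauchySeq_tendsto_of_complete hcau
  -- every weak ultrafilter limit lies in F and equals p
  have hult : ∀ U : Ultrafilter ℕ, (U : Filter ℕ) ≤ atTop →
      p ∈ F ∧ ∀ u : H, Tendsto (fun n => ⟪x n, u⟫) U (𝓝 ⟪p, u⟫) := by
    intro U hU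
    obtain ⟨q, hq⟩ := aux_weak U hM
    have hqC : q ∈ C := aux_wclosed hCne hCcl hCcv hxC hq
    have hqF : q ∈ F := by
      rw [hF]
      exact ⟨⟨hqC, aux_demi one_pos hT' hxC hM hqC hq (hrT.mono_left hU)⟩,
        hqC, aux_demi hk1 hS hxC hM hqC hq (hrS.mono_left hU)⟩
    have hpU := hp.mono_left hU
    have h0 : Tendsto (fun n => ⟪x n, PF (x n) - p⟫) U (𝓝 0) := by
      have hz : Tendsto (fun n => PF (x n) - p) U (𝓝 0) := by
        simpa using hpU.sub_const p
      refine squeeze_zero_norm (fun n => ?_)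
        (by simpa using hz.norm.const_mul (‖x 0 - p0‖ + ‖p0‖))
      exact (norm_inner_le_norm _ _).trans
        (mul_le_mul_of_nonneg_right (hM n) (norm_nonneg _))
    have h1 : Tendsto (fun n => ⟪x n - PF (x n), q - PF (x n)⟫) U (𝓝 ⟪q - p, q - p⟫) := by
      have h2 := ((hq (q - p)).sub h0).sub (hpU.inner (tendsto_const_nhds (x := q) |>.sub hpU))
      rw [sub_zero, ← inner_sub_left] at h2
      refine h2.congr (fun n => ?_)
      rw [inner_sub_left, ← inner_sub_right]
      congr 2
      abel
    have h3 : q - p = 0 := aux_self (le_of_tendsto' h1 (fun n => hvar _ _ hqF))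
    rw [← sub_eq_zero.1 h3]
    exact ⟨hqF, hq⟩
  refine ⟨p, (hult (Ultrafilter.of atTop) (Ultrafilter.of_le _)).1, fun u => ?_, hp⟩
  rw [tendsto_iff_ultrafilter]
  exact fun U hU => (hult U hU).2 u
end

section
/- Let C be a nonempty closed convex subset of a real Hilbert space H, A : C → H an α-inverse strongly monotone mapping (α > 0), T : C → C nonexpansive with F = F(T) ∩ Ω ≠ ∅, {λ_n} ⊂ [a, b] ⊂ (0, 2α), {α_n} ⊂ [c, d] ⊂ (0, 1), and let {x_n}, {y_n} be generated from x₀ ∈ C by t_n = P_C(x_n − λ_n A x_n), y_n = α_n x_n + (1 − α_n) T t_n, x_{n+1} = T P_C(y_n − λ_n A y_n). Then lim_{n→∞} ‖x_n − t_n‖ = 0 and lim_{n→∞} ‖T x_n − x_n‖ = 0. -/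
open scoped RealInnerProductSpace
open Filter Topology

theorem proj_var {H : Type*} [NormedAddCommGroup H] [InnerProductSpace ℝ H]
    (C : Set H) (hCcv : Convex ℝ C) (u v : H) (hv : v ∈ C)
    (h : ∀ w ∈ C, ‖u - v‖ ≤ ‖u - w‖) : ∀ w ∈ C, ⟪u - v, w - v⟫ ≤ 0 := by
  refine (norm_eq_iInf_iff_real_inner_le_zero hCcv hv).1 ?_
  haveI : Nonempty C := ⟨⟨v, hv⟩⟩
  refine le_antisymm (le_ciInf fun w => h w w.2) ?_
  exact ciInf_le (f := fun w : C => ‖u - w‖)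
    ⟨0, by rintro _ ⟨w, rfl⟩; exact norm_nonneg _⟩ ⟨v, hv⟩

theorem step_ineq {H : Type*} [NormedAddCommGroup H] [InnerProductSpace ℝ H]
    (w e g : H) (l a b α : ℝ) (ha : 0 < a) (hal : a ≤ l) (hlb : l ≤ b) (hb : b < 2 * α)
    (hg : α * ‖g‖ ^ 2 ≤ ⟪g, w⟫) (hv : 0 ≤ ⟪w - l • g - e, e⟫) :
    a * (2 * α - b) * ‖w - e‖ ^ 2 ≤
      (2 * a * (2 * α - b) + 2 * b ^ 2) * (‖w‖ ^ 2 - ‖e‖ ^ 2) := by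
  have e1 : ‖w - l • g‖ ^ 2 = ‖w‖ ^ 2 - 2 * l * ⟪g, w⟫ + l ^ 2 * ‖g‖ ^ 2 := by
    rw [norm_sub_sq_real, real_inner_smul_right, norm_smul, mul_pow, Real.norm_eq_abs, sq_abs,
      real_inner_comm]
    ring
  have e2 : ‖w - l • g‖ ^ 2 = ‖w - l • g - e‖ ^ 2 + 2 * ⟪w - l • g - e, e⟫ + ‖e‖ ^ 2 := by
    rw [← norm_add_sq_real, sub_add_cancel]
  have e3 : ‖w - e‖ ≤ ‖w - l • g - e‖ + l * ‖g‖ := by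
    have : w - e = (w - l • g - e) + l • g := by abel
    rw [this]
    refine (norm_add_le _ _).trans ?_
    rw [norm_smul, Real.norm_eq_abs, abs_of_nonneg (by linarith)]
  have hl : 0 < l := by linarith
  set q := ‖w - l • g - e‖
  set G := ‖g‖
  have hG : 0 ≤ G := norm_nonneg _
  have e4 : ‖w - e‖ ≤ q + b * G := e3.trans (by gcongr)
  have e5 : ‖w - e‖ ^ 2 ≤ 2 * q ^ 2 + 2 * b ^ 2 * G ^ 2 := by
    have : ‖w - e‖ ^ 2 ≤ (q + b * G) ^ 2 := by gcongr
    nlinarith [sq_nonneg (q - b * G)]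
  have e6 : q ^ 2 + l * (2 * α - l) * G ^ 2 ≤ ‖w‖ ^ 2 - ‖e‖ ^ 2 := by
    nlinarith [mul_le_mul_of_nonneg_left hg hl.le]
  have e7 : a * (2 * α - b) ≤ l * (2 * α - l) := by
    apply mul_le_mul <;> linarith
  have hm : 0 < a * (2 * α - b) := mul_pos ha (by linarith)
  have e8 : q ^ 2 + a * (2 * α - b) * G ^ 2 ≤ ‖w‖ ^ 2 - ‖e‖ ^ 2 :=
    le_trans (by gcongr) e6
  set m := a * (2 * α - b)
  have h1 := mul_le_mul_of_nonneg_left e5 hm.le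
  have h2 := mul_le_mul_of_nonneg_left e8 (show 0 ≤ 2 * m + 2 * b ^ 2 by positivity)
  have h3 : 0 ≤ b ^ 2 * q ^ 2 := by positivity
  have h4 : 0 ≤ m ^ 2 * G ^ 2 := by positivity
  have : 2 * a * (2 * α - b) = 2 * m := by simp only [m]; ring
  rw [this]
  nlinarith

theorem convex_sq {H : Type*} [NormedAddCommGroup H] [InnerProductSpace ℝ H]
    (u v : H) (s : ℝ) : ‖s • u + (1 - s) • v‖ ^ 2 =
      s * ‖u‖ ^ 2 + (1 - s) * ‖v‖ ^ 2 - s * (1 - s) * ‖u - v‖ ^ 2 := by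
  rw [norm_add_sq_real, norm_sub_sq_real, real_inner_smul_left, real_inner_smul_right,
    norm_smul, norm_smul, mul_pow, mul_pow, Real.norm_eq_abs, Real.norm_eq_abs, sq_abs, sq_abs]
  ring

theorem tendsto_of_sq_le (f D : ℕ → ℝ) (k l : ℝ) (hk : 0 < k) (hf : ∀ n, 0 ≤ f n)
    (hD : Tendsto D atTop (𝓝 l)) (h : ∀ n, k * f n ^ 2 ≤ D n - D (n + 1)) :
    Tendsto f atTop (𝓝 0) := by
  have h1 : Tendsto (fun n => (D n - D (n + 1)) / k) atTop (𝓝 0) := by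
    have := (hD.sub (hD.comp (tendsto_add_atTop_nat 1))).div_const k
    simpa using this
  have h2 : Tendsto (fun n => f n ^ 2) atTop (𝓝 0) :=
    squeeze_zero (fun n => sq_nonneg _)
      (fun n => by rw [le_div_iff₀ hk]; linarith [h n]) h1
  have h3 := h2.sqrt
  simpa [Real.sqrt_sq, hf] using h3

theorem stmt_15
    {H : Type*} [NormedAddCommGroup H] [InnerProductSpace ℝ H] [CompleteSpace H]
    (C : Set H) (hCne : C.Nonempty) (hCcl : IsClosed C) (hCcv : Convex ℝ C)
    (PC : H → H) (hPC : ∀ u : H, PC u ∈ C ∧ ∀ w ∈ C, ‖u - PC u‖ ≤ ‖u - w‖)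
    (α : ℝ) (hα : 0 < α) (A : H → H)
    (hA : ∀ x ∈ C, ∀ y ∈ C, ⟪A x - A y, x - y⟫ ≥ α * ‖A x - A y‖ ^ 2)
    (T : H → H) (hTmaps : Set.MapsTo T C C)
    (hT : ∀ x ∈ C, ∀ y ∈ C, ‖T x - T y‖ ≤ ‖x - y‖)
    (F : Set H)
    (hF : F = {x ∈ C | T x = x} ∩ {x ∈ C | ∀ y ∈ C, ⟪A x, y - x⟫ ≥ 0})
    (hFne : F.Nonempty)
    (a b c d : ℝ) (ha : 0 < a) (hab : a ≤ b) (hb : b < 2 * α)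
    (hc : 0 < c) (hcd : c ≤ d) (hd : d < 1)
    (lam : ℕ → ℝ) (hlam : ∀ n, lam n ∈ Set.Icc a b)
    (alp : ℕ → ℝ) (halp : ∀ n, alp n ∈ Set.Icc c d)
    (x y t : ℕ → H) (hx0 : x 0 ∈ C)
    (ht : ∀ n, t n = PC (x n - lam n • A (x n)))
    (hy : ∀ n, y n = alp n • x n + (1 - alp n) • T (t n))
    (hx : ∀ n, x (n + 1) = T (PC (y n - lam n • A (y n)))) :
    Tendsto (fun n => ‖x n - t n‖) atTop (𝓝 0) ∧
    Tendsto (fun n => ‖T (x n) - x n‖) atTop (𝓝 0) := by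
  obtain ⟨p, hp⟩ := hFne
  rw [hF] at hp
  obtain ⟨⟨hpC, hTp⟩, -, hpV⟩ := hp
  have hb0 : 0 < 2 * α - b := by linarith
  set M := a * (2 * α - b) with hM
  set K := 2 * a * (2 * α - b) + 2 * b ^ 2 with hK
  have hM0 : 0 < M := mul_pos ha hb0
  have hK0 : 0 < K := by positivity
  have key : ∀ z ∈ C, ∀ n, M / K * ‖z - PC (z - lam n • A z)‖ ^ 2 ≤
      ‖z - p‖ ^ 2 - ‖PC (z - lam n • A z) - p‖ ^ 2 := by
    intro z hz n
    obtain ⟨hs, hmin⟩ := hPC (z - lam n • A z)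
    have hv := proj_var C hCcv _ _ hs hmin p hpC
    have hpv := hpV _ hs
    set s := PC (z - lam n • A z)
    obtain ⟨hl1, hl2⟩ := hlam n
    have h := step_ineq (z - p) (s - p) (A z - A p) (lam n) a b α ha hl1 hl2 hb
      (hA z hz p hpC) (by
        have e : z - p - lam n • (A z - A p) - (s - p)
            = (z - lam n • A z - s) + lam n • A p := by
          rw [smul_sub]; abel
        rw [e, inner_add_left, real_inner_smul_left]
        rw [← neg_sub s p, inner_neg_right] at hv
        have := mul_nonneg (ha.le.trans hl1) hpv
        linarith)
    rw [sub_sub_sub_cancel_right] at h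
    rw [div_mul_eq_mul_div, div_le_iff₀ hK0]
    linarith
  have hκ : 0 < M / K := div_pos hM0 hK0
  set κ := M / K
  have hxC : ∀ n, x n ∈ C := by
    intro n
    cases n with
    | zero => exact hx0
    | succ n => rw [hx]; exact hTmaps (hPC _).1
  have htC : ∀ n, t n ∈ C := fun n => by rw [ht]; exact (hPC _).1
  have hyC : ∀ n, y n ∈ C := fun n => by
    rw [hy]
    obtain ⟨h1, h2⟩ := halp n
    exact hCcv (hxC n) (hTmaps (htC n)) (by linarith) (by linarith) (by ring)
  have hTle : ∀ z ∈ C, ‖T z - p‖ ^ 2 ≤ ‖z - p‖ ^ 2 := fun z hz => by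
    have := hT z hz p hpC
    rw [hTp] at this
    gcongr
  have main : ∀ n, (1 - d) * κ * ‖x n - t n‖ ^ 2 + c * (1 - d) * ‖x n - T (t n)‖ ^ 2 ≤
      ‖x n - p‖ ^ 2 - ‖x (n + 1) - p‖ ^ 2 := by
    intro n
    obtain ⟨h1, h2⟩ := halp n
    have k1 := key _ (hxC n) n
    rw [← ht] at k1
    have k2 := key _ (hyC n) n
    have k3 := hTle _ (hPC (y n - lam n • A (y n))).1
    rw [← hx] at k3
    have k4 := hTle _ (htC n)
    have k5 : ‖y n - p‖ ^ 2 = alp n * ‖x n - p‖ ^ 2 + (1 - alp n) * ‖T (t n) - p‖ ^ 2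
        - alp n * (1 - alp n) * ‖x n - T (t n)‖ ^ 2 := by
      have := convex_sq (x n - p) (T (t n) - p) (alp n)
      rw [sub_sub_sub_cancel_right] at this
      rw [← this, hy]
      congr 2
      module
    have k6 : 0 ≤ κ * ‖y n - PC (y n - lam n • A (y n))‖ ^ 2 := by positivity
    have k7 : (1 - d) * (κ * ‖x n - t n‖ ^ 2) ≤ (1 - alp n) * (κ * ‖x n - t n‖ ^ 2) := by
      gcongr
    have k8 : c * (1 - d) * ‖x n - T (t n)‖ ^ 2 ≤
        alp n * (1 - alp n) * ‖x n - T (t n)‖ ^ 2 := by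
      have : c * (1 - d) ≤ alp n * (1 - alp n) := by apply mul_le_mul <;> linarith
      gcongr
    have k9 := mul_le_mul_of_nonneg_left (k1.trans (sub_le_sub_left k4 _))
      (show 0 ≤ 1 - alp n by linarith)
    linarith
  have hd1 : 0 < 1 - d := by linarith
  have hanti : Antitone fun n => ‖x n - p‖ ^ 2 := antitone_nat_of_succ_le fun n => by
    have := main n
    have : 0 ≤ (1 - d) * κ * ‖x n - t n‖ ^ 2 + c * (1 - d) * ‖x n - T (t n)‖ ^ 2 := by
      positivity
    linarith
  have hlim := tendsto_atTop_ciInf hanti ⟨0, by rintro _ ⟨n, rfl⟩; positivity⟩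
  have r1 : Tendsto (fun n => ‖x n - t n‖) atTop (𝓝 0) :=
    tendsto_of_sq_le _ _ ((1 - d) * κ) _ (by positivity) (fun n => norm_nonneg _) hlim
      (fun n => by
        have := main n
        have : 0 ≤ c * (1 - d) * ‖x n - T (t n)‖ ^ 2 := by positivity
        linarith)
  have r2 : Tendsto (fun n => ‖x n - T (t n)‖) atTop (𝓝 0) :=
    tendsto_of_sq_le _ _ (c * (1 - d)) _ (by positivity) (fun n => norm_nonneg _) hlim
      (fun n => by
        have := main n
        have : 0 ≤ (1 - d) * κ * ‖x n - t n‖ ^ 2 := by positivity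
        linarith)
  refine ⟨r1, squeeze_zero (fun n => norm_nonneg _) (fun n => ?_) (by simpa using r1.add r2)⟩
  calc ‖T (x n) - x n‖ ≤ ‖T (x n) - T (t n)‖ + ‖T (t n) - x n‖ :=
        norm_sub_le_norm_sub_add_norm_sub _ _ _
    _ ≤ ‖x n - t n‖ + ‖x n - T (t n)‖ := by
        rw [norm_sub_rev (T (t n))]
        gcongr
        exact hT _ (hxC n) _ (htC n)
end
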